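/- Let W be a finite subset of ℝ^5 and let h^(1),…,h^(5) ∈ ℝ^5 be such that for each s ∈ {1,…,5}, h^(s) is an s-coordinate hyperplane for W. Then there exist indices i < j in {1,…,5} such that no w ∈ W satisfies both type_{h^(i)}(w) = type_{h^(j)}(w) and |type_{h^(i)}(w)| = 2 (equivalently, by the stable-intersection criterion, H(h^(i)) and H(h^(j)) contain every point of W in their stable intersection). -/

import Mathlib

noncomputable section

/-- The type of `w` with respect to `h`: the set of indices at which the minimum of
`h i + w i` is attained. -/
def typeSet (h w : Fin 5 → ℝ) : Set (Fin 5) :=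
  {i | ∀ j, h i + w i ≤ h j + w j}

/-- `h` is an `s`-coordinate hyperplane for `W`: every `w ∈ W` lies on the tropical
hyperplane `H(h)` (its type has at least two elements) and `s` is not in its type. -/
def IsCoordHyp (s : Fin 5) (h : Fin 5 → ℝ) (W : Finset (Fin 5 → ℝ)) : Prop :=
  ∀ w ∈ W, (∃ i j : Fin 5, i ≠ j ∧ i ∈ typeSet h w ∧ j ∈ typeSet h w) ∧ s ∉ typeSet h w

/-- The condition on a row `a` forced by a witness `w` for the pair `i, j` whose common type is
`{a, b}`, where `c` is the fifth index. -/
def RowCond (H : Fin 5 → Fin 5 → ℝ) (i j c a b : Fin 5) : Prop :=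
  H a i + H j b < H a b + H j i ∨ H a j + H i b < H a b + H i j ∨
    (H a c + H i b < H a b + H i c ∧ H a c + H j b < H a b + H j c)

/-- The full condition forced on `H` by a witness for the pair `i, j` with type `{a, b}`. -/
def WitCond (H : Fin 5 → Fin 5 → ℝ) (i j c a b : Fin 5) : Prop :=
  H i a + H j b = H i b + H j a ∧ RowCond H i j c a b ∧ RowCond H i j c b a

lemma lt_of_not_mem_typeSet {h w : Fin 5 → ℝ} {x y : Fin 5} (hx : x ∈ typeSet h w)
    (hy : y ∉ typeSet h w) : h x + w x < h y + w y := by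
  by_contra hlt
  exact hy fun k => (not_lt.mp hlt).trans (hx k)

/-- A witness with type `{a, b}` forces the row condition on row `a`. -/
lemma rowCond_of_witness (H : Fin 5 → Fin 5 → ℝ) (w : Fin 5 → ℝ) (i j c a b : Fin 5)
    (hcover : ∀ x, x = i ∨ x = j ∨ x = c ∨ x = a ∨ x = b)
    (hi : i ∉ ({a, b} : Set (Fin 5))) (hj : j ∉ ({a, b} : Set (Fin 5)))
    (hc : c ∉ ({a, b} : Set (Fin 5)))
    (hti : typeSet (H i) w = {a, b}) (htj : typeSet (H j) w = {a, b})
    (htwo : ∃ x y : Fin 5, x ≠ y ∧ x ∈ typeSet (H a) w ∧ y ∈ typeSet (H a) w)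
    (hself : a ∉ typeSet (H a) w) : RowCond H i j c a b := by
  have hbi : b ∈ typeSet (H i) w := by simp [hti]
  have hbj : b ∈ typeSet (H j) w := by simp [htj]
  have key : ∃ x, x ≠ b ∧ x ∈ typeSet (H a) w := by
    obtain ⟨x, y, hxy, hx, hy⟩ := htwo
    by_cases hxb : x = b
    · exact ⟨y, fun h => hxy (hxb.trans h.symm), hy⟩
    · exact ⟨x, hxb, hx⟩
  obtain ⟨x, hxb, hx⟩ := key
  have hxle := hx b
  unfold RowCond
  rcases hcover x with rfl | rfl | rfl | rfl | rfl
  · have := lt_of_not_mem_typeSet hbj (by rwa [htj])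
    left; linarith
  · have := lt_of_not_mem_typeSet hbi (by rwa [hti])
    right; left; linarith
  · have h1 := lt_of_not_mem_typeSet hbi (by rwa [hti])
    have h2 := lt_of_not_mem_typeSet hbj (by rwa [htj])
    right; right; constructor <;> linarith
  · exact absurd hx hself
  · exact absurd rfl hxb

lemma witCond_of_witness (H : Fin 5 → Fin 5 → ℝ) (w : Fin 5 → ℝ) (i j c a b : Fin 5)
    (hcover : ∀ x, x = i ∨ x = j ∨ x = c ∨ x = a ∨ x = b)
    (hi : i ∉ ({a, b} : Set (Fin 5))) (hj : j ∉ ({a, b} : Set (Fin 5)))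
    (hc : c ∉ ({a, b} : Set (Fin 5)))
    (hti : typeSet (H i) w = {a, b}) (htj : typeSet (H j) w = {a, b})
    (htwo : ∀ s, ∃ x y : Fin 5, x ≠ y ∧ x ∈ typeSet (H s) w ∧ y ∈ typeSet (H s) w)
    (hself : ∀ s, s ∉ typeSet (H s) w) : WitCond H i j c a b := by
  refine ⟨?_, rowCond_of_witness H w i j c a b hcover hi hj hc hti htj (htwo a) (hself a), ?_⟩
  · have hai : a ∈ typeSet (H i) w := by simp [hti]
    have haj : a ∈ typeSet (H j) w := by simp [htj]
    have hbi : b ∈ typeSet (H i) w := by simp [hti]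
    have hbj : b ∈ typeSet (H j) w := by simp [htj]
    have h1 := hai b
    have h2 := hbi a
    have h3 := haj b
    have h4 := hbj a
    linarith
  · rw [Set.pair_comm] at hi hj hc hti htj
    exact rowCond_of_witness H w i j c b a (fun x => by have := hcover x; tauto)
      hi hj hc hti htj (htwo b) (hself b)

/-- The three possible common types of a witness for the pair `i, j`. -/
lemma witness_cases (W : Finset (Fin 5 → ℝ)) (H : Fin 5 → Fin 5 → ℝ)
    (hcoord : ∀ s : Fin 5, IsCoordHyp s (H s) W) (i j p q r : Fin 5)
    (hcover : ∀ x, x = i ∨ x = j ∨ x = p ∨ x = q ∨ x = r)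
    (hnd : [i, j, p, q, r].Nodup)
    (hw : ∃ w ∈ W, typeSet (H i) w = typeSet (H j) w ∧
        ∃ a b : Fin 5, a ≠ b ∧ typeSet (H i) w = {a, b}) :
    WitCond H i j p q r ∨ WitCond H i j q p r ∨ WitCond H i j r p q := by
  obtain ⟨w, hwW, heq, a, b, hab, hti⟩ := hw
  have htj : typeSet (H j) w = {a, b} := heq ▸ hti
  have htwo := fun s => (hcoord s w hwW).1
  have hself := fun s => (hcoord s w hwW).2
  have hi : i ∉ ({a, b} : Set (Fin 5)) := hti ▸ hself i
  have hj : j ∉ ({a, b} : Set (Fin 5)) := htj ▸ hself j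
  have main : ∀ c a b : Fin 5, typeSet (H i) w = {a, b} → typeSet (H j) w = {a, b} →
      i ∉ ({a, b} : Set (Fin 5)) → j ∉ ({a, b} : Set (Fin 5)) → c ∉ ({a, b} : Set (Fin 5)) →
      (∀ x, x = i ∨ x = j ∨ x = c ∨ x = a ∨ x = b) → WitCond H i j c a b :=
    fun c a b h1 h2 h3 h4 h5 h6 =>
      witCond_of_witness H w i j c a b h6 h3 h4 h5 h1 h2 htwo hself
  have hset : ({a, b} : Set (Fin 5)) = {q, r} ∨ ({a, b} : Set (Fin 5)) = {p, r} ∨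
      ({a, b} : Set (Fin 5)) = {p, q} := by
    simp only [Set.mem_insert_iff, Set.mem_singleton_iff, not_or] at hi hj
    have ha := hcover a
    have hb := hcover b
    rcases ha with h | h | h | h | h
    · exact absurd h.symm hi.1
    · exact absurd h.symm hj.1
    all_goals
      rcases hb with h' | h' | h' | h' | h'
      · exact absurd h'.symm hi.2
      · exact absurd h'.symm hj.2
      all_goals
        subst h h'
        first
          | exact absurd rfl hab
          | simp [Set.pair_comm]
  simp only [List.nodup_cons, List.mem_cons, List.not_mem_nil, not_or] at hnd
  rcases hset with h | h | h <;> rw [h] at hti htj hi hj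
  · refine Or.inl (main p q r hti htj hi hj ?_ fun x => ?_)
    · simp; tauto
    · have := hcover x; tauto
  · refine Or.inr (Or.inl (main q p r hti htj hi hj ?_ fun x => ?_))
    · simp; grind
    · have := hcover x; tauto
  · refine Or.inr (Or.inr (main r p q hti htj hi hj ?_ fun x => ?_))
    · simp; grind
    · have := hcover x; tauto

set_option maxHeartbeats 4000000 in
/-- The conditions for all ten pairs are jointly contradictory. -/
lemma no_matrix (H : Fin 5 → Fin 5 → ℝ)
    (w01 : WitCond H 0 1 2 3 4 ∨ WitCond H 0 1 3 2 4 ∨ WitCond H 0 1 4 2 3)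
    (w02 : WitCond H 0 2 1 3 4 ∨ WitCond H 0 2 3 1 4 ∨ WitCond H 0 2 4 1 3)
    (w03 : WitCond H 0 3 1 2 4 ∨ WitCond H 0 3 2 1 4 ∨ WitCond H 0 3 4 1 2)
    (w04 : WitCond H 0 4 1 2 3 ∨ WitCond H 0 4 2 1 3 ∨ WitCond H 0 4 3 1 2)
    (w12 : WitCond H 1 2 0 3 4 ∨ WitCond H 1 2 3 0 4 ∨ WitCond H 1 2 4 0 3)
    (w13 : WitCond H 1 3 0 2 4 ∨ WitCond H 1 3 2 0 4 ∨ WitCond H 1 3 4 0 2)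
    (w14 : WitCond H 1 4 0 2 3 ∨ WitCond H 1 4 2 0 3 ∨ WitCond H 1 4 3 0 2)
    (w23 : WitCond H 2 3 0 1 4 ∨ WitCond H 2 3 1 0 4 ∨ WitCond H 2 3 4 0 1)
    (w24 : WitCond H 2 4 0 1 3 ∨ WitCond H 2 4 1 0 3 ∨ WitCond H 2 4 3 0 1)
    (w34 : WitCond H 3 4 0 1 2 ∨ WitCond H 3 4 1 0 2 ∨ WitCond H 3 4 2 0 1) :
    False := by
  unfold WitCond RowCond at *
  generalize H 0 1 = h01 at *
  generalize H 0 2 = h02 at *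
  generalize H 0 3 = h03 at *
  generalize H 0 4 = h04 at *
  generalize H 1 0 = h10 at *
  generalize H 1 2 = h12 at *
  generalize H 1 3 = h13 at *
  generalize H 1 4 = h14 at *
  generalize H 2 0 = h20 at *
  generalize H 2 1 = h21 at *
  generalize H 2 3 = h23 at *
  generalize H 2 4 = h24 at *
  generalize H 3 0 = h30 at *
  generalize H 3 1 = h31 at *
  generalize H 3 2 = h32 at *
  generalize H 3 4 = h34 at *
  generalize H 4 0 = h40 at *
  generalize H 4 1 = h41 at *
  generalize H 4 2 = h42 at *
  generalize H 4 3 = h43 at *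
  clear H
  grind (splits := 60)

/-- If `W ⊆ ℝ^5` is finite and for each `s` the vector `h⁽ˢ⁾` is an `s`-coordinate
hyperplane for `W`, then some pair of the five hyperplanes has no witness in `W` to their
nonstable intersection: there exist `i < j` such that no `w ∈ W` has equal two-element
types with respect to `h⁽ⁱ⁾` and `h⁽ʲ⁾`.  (Equivalently, `H(h⁽ⁱ⁾)` and `H(h⁽ʲ⁾)` contain
every point of `W` in their stable intersection.) -/
theorem exists_pair_no_witness (W : Finset (Fin 5 → ℝ)) (H : Fin 5 → Fin 5 → ℝ)
    (hcoord : ∀ s : Fin 5, IsCoordHyp s (H s) W) :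
    ∃ i j : Fin 5, i < j ∧
      ¬ ∃ w ∈ W, typeSet (H i) w = typeSet (H j) w ∧
        ∃ a b : Fin 5, a ≠ b ∧ typeSet (H i) w = {a, b} := by
  by_contra hno
  push Not at hno
  have hw : ∀ i j p q r : Fin 5, i < j →
      (∀ x, x = i ∨ x = j ∨ x = p ∨ x = q ∨ x = r) → [i, j, p, q, r].Nodup →
      WitCond H i j p q r ∨ WitCond H i j q p r ∨ WitCond H i j r p q := by
    intro i j p q r hij hcover hnd
    exact witness_cases W H hcoord i j p q r hcover hnd (hno i j hij)
  exact no_matrix H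
    (hw 0 1 2 3 4 (by decide) (by decide) (by decide))
    (hw 0 2 1 3 4 (by decide) (by decide) (by decide))
    (hw 0 3 1 2 4 (by decide) (by decide) (by decide))
    (hw 0 4 1 2 3 (by decide) (by decide) (by decide))
    (hw 1 2 0 3 4 (by decide) (by decide) (by decide))
    (hw 1 3 0 2 4 (by decide) (by decide) (by decide))
    (hw 1 4 0 2 3 (by decide) (by decide) (by decide))
    (hw 2 3 0 1 4 (by decide) (by decide) (by decide))
    (hw 2 4 0 1 3 (by decide) (by decide) (by decide))
    (hw 3 4 0 1 2 (by decide) (by decide) (by decide))
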